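/- For every positive integer m, the Minkowski dimension of E_m equals 1 − 1/2^m; equivalently, lim_{δ→0⁺} log λ(V_δ(E_m)) / log δ = 1/2^m. -/

import Mathlib

open MeasureTheory Filter Set

/-- The closed `δ`-neighbourhood `V_δ(Ω) = {x : ∃ y ∈ Ω, |x - y| ≤ δ}`. -/
def closedNbhd (Ω : Set ℝ) (δ : ℝ) : Set ℝ := {x : ℝ | ∃ y ∈ Ω, |x - y| ≤ δ}

/-- `E_m`: the set of rationals `x ∈ (0,1]` whose greedy Egyptian fraction expansion
has length `m`: there are integers `1 ≤ a 0 < a 1 < ⋯ < a (m-1)` with `x = Σ_{i<m} 1/a i`,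
and for every `ℓ < m` one has `Σ_{i ≤ ℓ} 1/a i ≤ x` and
`x - Σ_{i<ℓ} 1/a i < 1/(a ℓ - 1)` (the latter stated in the multiplied-out form
`(a ℓ - 1) * (x - Σ_{i<ℓ} 1/a i) < 1`, which is the correct reading also when `a ℓ = 1`,
where `1/(a ℓ - 1) = ∞`). -/
def Eset (m : ℕ) : Set ℝ :=
  {x : ℝ | x ∈ Set.Ioc (0 : ℝ) 1 ∧
    ∃ a : ℕ → ℕ,
      (∀ i, i < m → 1 ≤ a i) ∧
      (∀ i j, i < j → j < m → a i < a j) ∧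
      x = ∑ i ∈ Finset.range m, (1 : ℝ) / (a i : ℝ) ∧
      ∀ ℓ, ℓ < m →
        (∑ i ∈ Finset.range (ℓ + 1), (1 : ℝ) / (a i : ℝ)) ≤ x ∧
        ((a ℓ : ℝ) - 1) * (x - ∑ i ∈ Finset.range ℓ, (1 : ℝ) / (a i : ℝ)) < 1}

/-!
Subtracting from `x ∈ (0, 1)` its first greedy unit fraction leaves a remainder at most `x ^ 2`, so
`m` greedy steps leave at most `x ^ 2 ^ m`. Since the expansion of an irrational number never stops,
every irrational `x ∈ (0, s)` lies within `s ^ 2 ^ m` of `E_m`, and the `s ^ 2 ^ m`-neighbourhood of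
`E_m` has measure at least `s`.

Conversely, the points of `E_{m+1}` whose first denominator exceeds `1 / s` lie in `[0, s]`, and the
remaining ones lie in about `1 / s` translates of `E_m` (of `{0}` if `m = 0`). Since
`s ^ 2 ^ (m + 1) = (s ^ 2) ^ 2 ^ m`, each translate has a neighbourhood of measure `O(s ^ 2)` by
induction, which gives `O(s)` in total.
-/

section Asymptotics

open Asymptotics Topology

lemma tendsto_log_div_log_of_isTheta_rpow {f : ℝ → ℝ} {s : ℝ}
    (hf : f =Θ[𝓝[>] 0] fun δ ↦ δ ^ s) :
    Tendsto (fun δ ↦ Real.log (f δ) / Real.log δ) (𝓝[>] 0) (𝓝 s) := by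
  obtain ⟨C, hC, hupper⟩ := hf.1.exists_pos
  obtain ⟨c, hc, hlower⟩ := hf.2.exists_pos
  have hlim (b : ℝ) : Tendsto (fun δ ↦ b / Real.log δ + s) (𝓝[>] 0) (𝓝 s) := by
    simpa using (Real.tendsto_log_nhdsGT_zero.const_div_atBot b).add_const s
  have hbounds : ∀ᶠ δ in 𝓝[>] (0 : ℝ),
      Real.log C / Real.log δ + s ≤ Real.log (f δ) / Real.log δ ∧
        Real.log (f δ) / Real.log δ ≤ -Real.log c / Real.log δ + s := by
    filter_upwards [hupper.bound, hlower.bound, Ioo_mem_nhdsGT one_pos] with δ hu hl ⟨hδ0, hδ1⟩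
    have hlog : Real.log δ < 0 := Real.log_neg hδ0 hδ1
    have hpow : 0 < δ ^ s := Real.rpow_pos_of_pos hδ0 s
    rw [Real.norm_of_nonneg hpow.le] at hu hl
    have hfδ : 0 < ‖f δ‖ := pos_of_mul_pos_right (hpow.trans_le hl) hc.le
    have hu' := Real.log_le_log hfδ hu
    have hl' := Real.log_le_log hpow hl
    rw [Real.log_mul hC.ne' hpow.ne', Real.log_rpow hδ0, Real.norm_eq_abs, Real.log_abs] at hu'
    rw [Real.log_mul hc.ne' hfδ.ne', Real.log_rpow hδ0, Real.norm_eq_abs, Real.log_abs] at hl'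
    rw [div_add' _ _ _ hlog.ne, div_add' _ _ _ hlog.ne, div_le_div_right_of_neg hlog,
      div_le_div_right_of_neg hlog]
    constructor <;> linarith
  exact tendsto_of_tendsto_of_tendsto_of_le_of_le' (hlim _) (hlim _)
    (hbounds.mono fun _ h ↦ h.1) (hbounds.mono fun _ h ↦ h.2)

end Asymptotics

section Neighbourhoods

open scoped Pointwise

lemma closedNbhd_eq_add_closedBall (Ω : Set ℝ) (δ : ℝ) :
    closedNbhd Ω δ = Ω + Metric.closedBall 0 δ := by
  ext x
  constructor
  · rintro ⟨y, hy, hxy⟩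
    exact ⟨y, hy, x - y, by simpa using hxy, add_sub_cancel y x⟩
  · rintro ⟨y, hy, z, hz, rfl⟩
    exact ⟨y, hy, by simpa using hz⟩

lemma closedNbhd_mono {Ω Ω' : Set ℝ} (h : Ω ⊆ Ω') (δ : ℝ) :
    closedNbhd Ω δ ⊆ closedNbhd Ω' δ :=
  fun _ ⟨y, hy, hxy⟩ ↦ ⟨y, h hy, hxy⟩

lemma volume_closedNbhd_vadd (c : ℝ) (Ω : Set ℝ) (δ : ℝ) :
    volume (closedNbhd (c +ᵥ Ω) δ) = volume (closedNbhd Ω δ) := by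
  rw [closedNbhd_eq_add_closedBall, closedNbhd_eq_add_closedBall, vadd_add_assoc, measure_vadd]

lemma volume_closedNbhd_Icc_le (a b δ : ℝ) :
    volume (closedNbhd (Icc a b) δ) ≤ ENNReal.ofReal (b - a + 2 * δ) := by
  have hsub : closedNbhd (Icc a b) δ ⊆ Icc (a - δ) (b + δ) := by
    rintro x ⟨y, ⟨hay, hyb⟩, hxy⟩
    rw [abs_le] at hxy
    constructor <;> linarith
  calc volume (closedNbhd (Icc a b) δ) ≤ volume (Icc (a - δ) (b + δ)) := measure_mono hsub
    _ = ENNReal.ofReal (b - a + 2 * δ) := by rw [Real.volume_Icc]; ring_nf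

lemma volume_closedNbhd_biUnion_vadd_union_le {ι : Type*} (F : Finset ι) (c : ι → ℝ)
    (Ω Ω' : Set ℝ) (δ : ℝ) :
    volume (closedNbhd ((⋃ i ∈ F, c i +ᵥ Ω) ∪ Ω') δ) ≤
      F.card * volume (closedNbhd Ω δ) + volume (closedNbhd Ω' δ) := by
  have hnbhd : closedNbhd ((⋃ i ∈ F, c i +ᵥ Ω) ∪ Ω') δ =
      (⋃ i ∈ F, closedNbhd (c i +ᵥ Ω) δ) ∪ closedNbhd Ω' δ := by
    simp only [closedNbhd_eq_add_closedBall, union_add, iUnion_add]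
  calc volume (closedNbhd ((⋃ i ∈ F, c i +ᵥ Ω) ∪ Ω') δ)
      ≤ ∑ i ∈ F, volume (closedNbhd (c i +ᵥ Ω) δ) + volume (closedNbhd Ω' δ) := by
        rw [hnbhd]
        exact (measure_union_le _ _).trans (by gcongr; exact measure_biUnion_finset_le _ _)
    _ = F.card * volume (closedNbhd Ω δ) + volume (closedNbhd Ω' δ) := by
        simp only [volume_closedNbhd_vadd, Finset.sum_const, nsmul_eq_mul]

end Neighbourhoods

section GreedyExpansions

/-- The first `m` values of `a` are the denominators of a greedy Egyptian fraction expansion of `x`.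
Unlike in `Eset`, the number `x` is not confined to `(0, 1]`, so that `0` has the expansion of
length `0`; that the partial sums are at most `x` follows from `eq_sum`. -/
structure IsGreedyExpansion (m : ℕ) (a : ℕ → ℕ) (x : ℝ) : Prop where
  pos : ∀ i < m, 0 < a i
  strictMonoOn : StrictMonoOn a (Iio m)
  eq_sum : x = ∑ i ∈ Finset.range m, (1 : ℝ) / a i
  greedy : ∀ ℓ < m, ((a ℓ : ℝ) - 1) * (x - ∑ i ∈ Finset.range ℓ, (1 : ℝ) / a i) < 1

/-- The real numbers with a greedy Egyptian fraction expansion of length `m`: the set `E_m` without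
the restriction to `(0, 1]`, which makes it amenable to induction starting from `m = 0`. -/
def greedySums (m : ℕ) : Set ℝ := {x | ∃ a, IsGreedyExpansion m a x}

variable {m n : ℕ} {a : ℕ → ℕ} {x y : ℝ}

namespace IsGreedyExpansion

lemma sum_range_le (h : IsGreedyExpansion m a x) {ℓ : ℕ} (hℓ : ℓ ≤ m) :
    ∑ i ∈ Finset.range ℓ, (1 : ℝ) / a i ≤ x := by
  rw [h.eq_sum]
  exact Finset.sum_le_sum_of_subset_of_nonneg (Finset.range_mono hℓ) fun _ _ _ ↦ by positivity

lemma one_div_apply_zero_le (h : IsGreedyExpansion m a x) (hm : 0 < m) : 1 / (a 0 : ℝ) ≤ x := by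
  simpa using h.sum_range_le (ℓ := 1) hm

lemma nonneg (h : IsGreedyExpansion m a x) : 0 ≤ x := by
  simpa using h.sum_range_le m.zero_le

lemma apply_zero_sub_one_mul_lt_one (h : IsGreedyExpansion m a x) (hm : 0 < m) :
    ((a 0 : ℝ) - 1) * x < 1 := by
  simpa using h.greedy 0 hm

lemma lt_apply_zero (h : IsGreedyExpansion m a y) (hm : 0 < m) (hn : 1 < n)
    (hny : ((n : ℝ) - 1) * (1 / n + y) < 1) : n < a 0 := by
  have hn' : (2 : ℝ) ≤ n := mod_cast hn
  have ha : (0 : ℝ) < a 0 := mod_cast h.pos 0 hm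
  have hsum : ((n : ℝ) - 1) * (1 / n + 1 / a 0) < 1 := by
    refine lt_of_le_of_lt ?_ hny
    gcongr
    · linarith
    · exact h.one_div_apply_zero_le hm
  have hlt : (n : ℝ) * (n - 1) < a 0 := by
    field_simp at hsum
    linarith
  exact_mod_cast (by nlinarith : (n : ℝ) < a 0)

lemma cons (h : IsGreedyExpansion m a y) (hn : 1 < n)
    (hny : ((n : ℝ) - 1) * (1 / n + y) < 1) :
    IsGreedyExpansion (m + 1) (fun i ↦ Nat.casesOn i n a) (1 / n + y) where
  pos
    | 0, _ => zero_lt_one.trans hn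
    | i + 1, hi => h.pos i (Nat.lt_of_succ_lt_succ hi)
  strictMonoOn := by
    rintro (_ | i) hi (_ | j) hj hij
    · exact absurd hij (lt_irrefl 0)
    · have hjm : j < m := Nat.lt_of_succ_lt_succ hj
      have hm : 0 < m := j.zero_le.trans_lt hjm
      exact (h.lt_apply_zero hm hn hny).trans_le
        (h.strictMonoOn.monotoneOn hm hjm j.zero_le)
    · exact absurd hij (Nat.not_lt_zero _)
    · exact h.strictMonoOn (Nat.lt_of_succ_lt_succ hi) (Nat.lt_of_succ_lt_succ hj)
        (Nat.lt_of_succ_lt_succ hij)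
  eq_sum := by
    rw [Finset.sum_range_succ', ← h.eq_sum, add_comm]
    rfl
  greedy
    | 0, _ => by simpa using hny
    | ℓ + 1, hℓ => by
      rw [Finset.sum_range_succ', add_comm (1 / (n : ℝ))]
      simpa only [Nat.rec_zero, add_sub_add_right_eq_sub] using
        h.greedy ℓ (Nat.lt_of_succ_lt_succ hℓ)

lemma tail (h : IsGreedyExpansion (m + 1) a x) :
    IsGreedyExpansion m (fun i ↦ a (i + 1)) (x - 1 / a 0) where
  pos i hi := h.pos (i + 1) (Nat.succ_lt_succ hi)
  strictMonoOn _ hi _ hj hij :=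
    h.strictMonoOn (Nat.succ_lt_succ hi) (Nat.succ_lt_succ hj) (Nat.succ_lt_succ hij)
  eq_sum := by rw [h.eq_sum, Finset.sum_range_succ', add_sub_cancel_right]
  greedy ℓ hℓ := by
    have := h.greedy (ℓ + 1) (Nat.succ_lt_succ hℓ)
    rwa [Finset.sum_range_succ', sub_add_eq_sub_sub_swap] at this

end IsGreedyExpansion

lemma Eset_eq_Ioc_inter_greedySums (m : ℕ) : Eset m = Ioc 0 1 ∩ greedySums m := by
  ext x
  refine and_congr_right fun _ ↦ exists_congr fun a ↦ ?_
  constructor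
  · rintro ⟨hpos, hmono, hsum, hgreedy⟩
    exact ⟨hpos, fun i _ j hj hij ↦ hmono i j hij hj, hsum, fun ℓ hℓ ↦ (hgreedy ℓ hℓ).2⟩
  · intro h
    exact ⟨h.pos, fun i j hij hj ↦ h.strictMonoOn (hij.trans hj) hj hij, h.eq_sum,
      fun ℓ hℓ ↦ ⟨h.sum_range_le hℓ, h.greedy ℓ hℓ⟩⟩

lemma greedySums_zero : greedySums 0 = {0} := by
  ext x
  constructor
  · rintro ⟨a, h⟩
    simpa using h.eq_sum
  · rintro rfl
    exact ⟨fun _ ↦ 1, by simp, by simp [StrictMonoOn], by simp, by simp⟩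

lemma pos_of_mem_greedySums (hm : 0 < m) (hx : x ∈ greedySums m) : 0 < x := by
  obtain ⟨a, h⟩ := hx
  have ha : (0 : ℝ) < a 0 := mod_cast h.pos 0 hm
  exact (one_div_pos.2 ha).trans_le (h.one_div_apply_zero_le hm)

end GreedyExpansions

section LowerBound

variable {m : ℕ} {x s : ℝ}

lemma exists_greedy_denominator (hx0 : 0 < x) (hx1 : x < 1) :
    ∃ n : ℕ, 1 < n ∧ 1 / n ≤ x ∧ ((n : ℝ) - 1) * x < 1 := by
  have hle : 1 / x ≤ ⌈1 / x⌉₊ := Nat.le_ceil _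
  have hlt : (⌈1 / x⌉₊ : ℝ) < 1 / x + 1 := Nat.ceil_lt_add_one (by positivity)
  have hone : 1 < (⌈1 / x⌉₊ : ℝ) := ((one_lt_div hx0).2 hx1).trans_le hle
  refine ⟨⌈1 / x⌉₊, mod_cast hone, (one_div_le hx0 (one_pos.trans hone)).1 hle, ?_⟩
  rw [← lt_div_iff₀ hx0]
  linarith

lemma sub_one_div_le_sq {n : ℝ} (hn : 0 < n) (hnx : 1 / n ≤ x) (hgreedy : (n - 1) * x < 1) :
    x - 1 / n ≤ x ^ 2 := by
  have hx : 0 < x := (one_div_pos.2 hn).trans_le hnx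
  calc x - 1 / n = (n * x - 1) * (1 / n) := by field_simp
    _ ≤ x * x := by gcongr; linarith
    _ = x ^ 2 := (sq x).symm

lemma exists_mem_greedySums_sub_le_pow (m : ℕ) (hx : Irrational x) (hx0 : 0 < x) (hx1 : x < 1) :
    ∃ y ∈ greedySums m, y ≤ x ∧ x - y ≤ x ^ 2 ^ m := by
  induction m generalizing x with
  | zero => exact ⟨0, by simp [greedySums_zero], hx0.le, by simp⟩
  | succ m ih =>
    obtain ⟨n, hn, hnx, hgreedy⟩ := exists_greedy_denominator hx0 hx1
    have hn' : (1 : ℝ) < n := mod_cast hn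
    have hr : Irrational (x - 1 / n) := by simpa using hx.sub_ratCast (1 / n)
    have hr0 : 0 < x - 1 / n := (sub_nonneg.2 hnx).lt_of_ne' hr.ne_zero
    have hrsq : x - 1 / n ≤ x ^ 2 := sub_one_div_le_sq (one_pos.trans hn') hnx hgreedy
    obtain ⟨y, ⟨a, hy⟩, hyr, hdist⟩ := ih hr hr0 ((sub_lt_self x (by positivity)).trans hx1)
    have hyx : 1 / n + y ≤ x := by linarith
    have hny : ((n : ℝ) - 1) * (1 / n + y) < 1 :=
      (mul_le_mul_of_nonneg_left hyx (sub_pos.2 hn').le).trans_lt hgreedy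
    refine ⟨1 / n + y, ⟨_, hy.cons hn hny⟩, hyx, ?_⟩
    calc x - (1 / n + y) = x - 1 / n - y := (sub_sub ..).symm
      _ ≤ (x - 1 / n) ^ 2 ^ m := hdist
      _ ≤ (x ^ 2) ^ 2 ^ m := by gcongr
      _ = x ^ 2 ^ (m + 1) := by rw [← pow_mul, pow_succ']

lemma ofReal_le_volume_closedNbhd_Eset (hm : 0 < m) (hs : s ≤ 1) :
    ENNReal.ofReal s ≤ volume (closedNbhd (Eset m) (s ^ 2 ^ m)) := by
  have hsub : Ioo 0 s \ range ((↑) : ℚ → ℝ) ⊆ closedNbhd (Eset m) (s ^ 2 ^ m) := by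
    rintro x ⟨⟨hx0, hxs⟩, hx⟩
    obtain ⟨y, hy, hyx, hdist⟩ := exists_mem_greedySums_sub_le_pow m hx hx0 (hxs.trans_le hs)
    have hyE : y ∈ Eset m := by
      rw [Eset_eq_Ioc_inter_greedySums]
      exact ⟨⟨pos_of_mem_greedySums hm hy, by linarith⟩, hy⟩
    refine ⟨y, hyE, ?_⟩
    rw [abs_of_nonneg (sub_nonneg.2 hyx)]
    exact hdist.trans (by gcongr)
  calc ENNReal.ofReal s = volume (Ioo 0 s \ range ((↑) : ℚ → ℝ)) := by
        rw [measure_sdiff_null ((countable_range _).measure_zero _), Real.volume_Ioo, sub_zero]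
    _ ≤ volume (closedNbhd (Eset m) (s ^ 2 ^ m)) := measure_mono hsub

end LowerBound

section UpperBound

open scoped Pointwise

lemma greedySums_succ_subset (m : ℕ) {A : ℕ} (hA : 0 < A) :
    greedySums (m + 1) ⊆
      (⋃ n ∈ Finset.Icc 1 A, (1 / n : ℝ) +ᵥ greedySums m) ∪ Icc 0 (1 / A : ℝ) := by
  rintro x ⟨a, h⟩
  rcases le_or_gt (a 0) A with ha | ha
  · left
    rw [mem_iUnion₂]
    exact ⟨a 0, Finset.mem_Icc.2 ⟨h.pos 0 m.succ_pos, ha⟩, x - 1 / a 0, ⟨_, h.tail⟩,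
      add_sub_cancel _ x⟩
  · right
    refine ⟨h.nonneg, ?_⟩
    have hA' : (A : ℝ) ≤ a 0 - 1 := le_sub_iff_add_le.2 (mod_cast ha)
    rw [le_div_iff₀' (by positivity)]
    exact (mul_le_mul_of_nonneg_right hA' h.nonneg).trans
      (h.apply_zero_sub_one_mul_lt_one m.succ_pos).le

lemma volume_closedNbhd_greedySums_succ_le (m : ℕ) {A : ℕ} (hA : 0 < A) (δ : ℝ) :
    volume (closedNbhd (greedySums (m + 1)) δ) ≤
      A * volume (closedNbhd (greedySums m) δ) + ENNReal.ofReal (1 / A + 2 * δ) := by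
  calc volume (closedNbhd (greedySums (m + 1)) δ)
      ≤ (Finset.Icc 1 A).card * volume (closedNbhd (greedySums m) δ) +
          volume (closedNbhd (Icc 0 (1 / A : ℝ)) δ) :=
        (measure_mono (closedNbhd_mono (greedySums_succ_subset m hA) δ)).trans
          (volume_closedNbhd_biUnion_vadd_union_le ..)
    _ ≤ A * volume (closedNbhd (greedySums m) δ) + ENNReal.ofReal (1 / A + 2 * δ) := by
        rw [Nat.card_Icc, Nat.add_sub_cancel]
        gcongr
        simpa using volume_closedNbhd_Icc_le 0 (1 / A : ℝ) δ

lemma exists_volume_closedNbhd_greedySums_le (m : ℕ) : ∃ C : ℝ, 0 ≤ C ∧ ∀ s ∈ Ioc (0 : ℝ) 1,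
    volume (closedNbhd (greedySums m) (s ^ 2 ^ m)) ≤ ENNReal.ofReal (C * s) := by
  induction m with
  | zero =>
    refine ⟨2, two_pos.le, fun s _ ↦ ?_⟩
    simpa [greedySums_zero] using volume_closedNbhd_Icc_le 0 0 s
  | succ m ih =>
    obtain ⟨C, hC, ih⟩ := ih
    refine ⟨2 * C + 3, by positivity, fun s ⟨hs0, hs1⟩ ↦ ?_⟩
    have hscale : (s ^ 2) ^ 2 ^ m = s ^ 2 ^ (m + 1) := by rw [← pow_mul, pow_succ']
    have hδ : s ^ 2 ^ (m + 1) ≤ s := pow_le_of_le_one hs0.le hs1 (by positivity)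
    set A := ⌈1 / s⌉₊
    have hA : 0 < A := Nat.ceil_pos.2 (by positivity)
    have hAs : 1 / (A : ℝ) ≤ s := (one_div_le hs0 (by positivity)).1 (Nat.le_ceil _)
    have hAs2 : A * s ≤ 2 := by
      have hlt : (A : ℝ) < 1 / s + 1 := Nat.ceil_lt_add_one (by positivity)
      calc A * s ≤ (1 / s + 1) * s := by gcongr
        _ = 1 + s := by field_simp
        _ ≤ 2 := by linarith
    have hih := ih (s ^ 2) ⟨by positivity, pow_le_one₀ hs0.le hs1⟩
    rw [hscale] at hih
    calc volume (closedNbhd (greedySums (m + 1)) (s ^ 2 ^ (m + 1)))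
        ≤ A * ENNReal.ofReal (C * s ^ 2) + ENNReal.ofReal (1 / A + 2 * s ^ 2 ^ (m + 1)) :=
          (volume_closedNbhd_greedySums_succ_le m hA _).trans (by gcongr)
      _ = ENNReal.ofReal (A * s * (C * s) + (1 / A + 2 * s ^ 2 ^ (m + 1))) := by
          rw [← ENNReal.ofReal_natCast, ← ENNReal.ofReal_mul (by positivity),
            ← ENNReal.ofReal_add (by positivity) (by positivity)]
          ring_nf
      _ ≤ ENNReal.ofReal (2 * (C * s) + (s + 2 * s)) := by gcongr
      _ = ENNReal.ofReal ((2 * C + 3) * s) := by ring_nf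

end UpperBound

open Asymptotics Topology in
lemma volume_closedNbhd_Eset_isTheta {m : ℕ} (hm : 0 < m) :
    (fun δ ↦ (volume (closedNbhd (Eset m) δ)).toReal) =Θ[𝓝[>] 0]
      fun δ : ℝ ↦ δ ^ ((1 : ℝ) / 2 ^ m) := by
  obtain ⟨C, hC, hupper⟩ := exists_volume_closedNbhd_greedySums_le m
  have hbounds : ∀ᶠ δ in 𝓝[>] (0 : ℝ), 0 ≤ δ ^ ((1 : ℝ) / 2 ^ m) ∧
      δ ^ ((1 : ℝ) / 2 ^ m) ≤ (volume (closedNbhd (Eset m) δ)).toReal ∧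
      (volume (closedNbhd (Eset m) δ)).toReal ≤ C * δ ^ ((1 : ℝ) / 2 ^ m) := by
    filter_upwards [Ioo_mem_nhdsGT one_pos] with δ ⟨hδ0, hδ1⟩
    set s := δ ^ ((1 : ℝ) / 2 ^ m) with hs
    have hs0 : 0 < s := Real.rpow_pos_of_pos hδ0 _
    have hs1 : s ≤ 1 := Real.rpow_le_one hδ0.le hδ1.le (by positivity)
    have hsδ : s ^ 2 ^ m = δ := by
      rw [hs, one_div, ← Nat.cast_ofNat, ← Nat.cast_pow, Real.rpow_inv_natCast_pow hδ0.le]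
      positivity
    have hu : volume (closedNbhd (Eset m) δ) ≤ ENNReal.ofReal (C * s) := by
      rw [Eset_eq_Ioc_inter_greedySums, ← hsδ]
      exact (measure_mono (closedNbhd_mono inter_subset_right _)).trans (hupper s ⟨hs0, hs1⟩)
    have hl : ENNReal.ofReal s ≤ volume (closedNbhd (Eset m) δ) :=
      hsδ ▸ ofReal_le_volume_closedNbhd_Eset hm hs1
    exact ⟨hs0.le, (ENNReal.ofReal_le_iff_le_toReal (hu.trans_lt ENNReal.ofReal_lt_top).ne).1 hl,
      ENNReal.toReal_le_of_le_ofReal (by positivity) hu⟩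
  constructor
  · refine .of_bound C (hbounds.mono fun δ ⟨hs, _, hu⟩ ↦ ?_)
    rwa [Real.norm_of_nonneg ENNReal.toReal_nonneg, Real.norm_of_nonneg hs]
  · refine .of_bound 1 (hbounds.mono fun δ ⟨hs, hl, _⟩ ↦ ?_)
    rwa [one_mul, Real.norm_of_nonneg ENNReal.toReal_nonneg, Real.norm_of_nonneg hs]

/-- The Minkowski dimension of `E_m` is `1 - 1/2^m`:
`lim_{δ → 0⁺} log λ(V_δ(E_m)) / log δ = 1/2^m`. -/
theorem minkowski_dim_Em (m : ℕ) (hm : 0 < m) :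
    Tendsto (fun δ : ℝ => Real.log (volume (closedNbhd (Eset m) δ)).toReal / Real.log δ)
      (nhdsWithin (0 : ℝ) (Set.Ioi 0)) (nhds ((1 : ℝ) / 2 ^ m)) :=
  tendsto_log_div_log_of_isTheta_rpow (volume_closedNbhd_Eset_isTheta hm)
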